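/- Let A ∈ ℝ^{n×n} be nonsingular, k ≥ 1, and let b ∈ ℝ^n be a unit norm vector with d(A, b) > k. Set r_k = GMRES(A, b, k). Then d(Aᵀ, r_k) > k, and b satisfies the cross equality for A and step k if and only if b ∈ K_{k+1}(Aᵀ, r_k). In particular, every unit norm vector b with d(A, b) = n satisfies the cross equality for A and step k = n − 1. -/

import Mathlib

open Polynomial Matrix

/-- The Euclidean norm of a real vector. -/
noncomputable def euclNorm {ι : Type*} [Fintype ι] (v : ι → ℝ) : ℝ :=
  Real.sqrt (∑ i, v i ^ 2)

/-- The Euclidean norm of a complex vector. -/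
noncomputable def euclNormC {ι : Type*} [Fintype ι] (v : ι → ℂ) : ℝ :=
  Real.sqrt (∑ i, ‖v i‖ ^ 2)

/-- The Euclidean inner product of two real vectors. -/
noncomputable def edot {ι : Type*} [Fintype ι] (u v : ι → ℝ) : ℝ := ∑ i, u i * v i

/-- `p ∈ π_k`: real polynomials of degree at most `k` with value `1` at the origin. -/
def IsPik (k : ℕ) (p : Polynomial ℝ) : Prop := p.natDegree ≤ k ∧ p.eval 0 = 1

/-- `p ∈ π_{k,ℂ}`: complex polynomials of degree at most `k` with value `1` at the origin. -/
def IsPikC (k : ℕ) (p : Polynomial ℂ) : Prop := p.natDegree ≤ k ∧ p.eval 0 = 1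

/-- The `k`-th GMRES residual norm `min_{p ∈ π_k} ‖p(A)v‖`. -/
noncomputable def gmresVal {ι : Type*} [Fintype ι] [DecidableEq ι]
    (A : Matrix ι ι ℝ) (k : ℕ) (v : ι → ℝ) : ℝ :=
  sInf {s : ℝ | ∃ p : Polynomial ℝ, IsPik k p ∧ s = euclNorm ((Polynomial.aeval A p).mulVec v)}

/-- The `k`-th worst-case GMRES approximation `Ψ_k(A) = max_{‖v‖=1} min_{p ∈ π_k} ‖p(A)v‖`. -/
noncomputable def Psi {ι : Type*} [Fintype ι] [DecidableEq ι]
    (A : Matrix ι ι ℝ) (k : ℕ) : ℝ :=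
  sSup {r : ℝ | ∃ v : ι → ℝ, euclNorm v = 1 ∧ r = gmresVal A k v}

/-- `d(A)`: the degree of the minimal polynomial of `A`. -/
noncomputable def dA {ι : Type*} [Fintype ι] [DecidableEq ι] (A : Matrix ι ι ℝ) : ℕ :=
  (minpoly ℝ A).natDegree

/-- `d(A,b)`: the smallest degree of a nonzero polynomial `q` with `q(A)b = 0`. -/
noncomputable def dAb {ι : Type*} [Fintype ι] [DecidableEq ι]
    (A : Matrix ι ι ℝ) (b : ι → ℝ) : ℕ :=
  sInf {d : ℕ | ∃ q : Polynomial ℝ, q ≠ 0 ∧ q.natDegree = d ∧ (Polynomial.aeval A q).mulVec b = 0}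

/-- `r = GMRES(A,b,k)`: `r = p(A)b` for some `p ∈ π_k` minimizing `‖p(A)b‖` over `π_k`. -/
def IsGmresRes {ι : Type*} [Fintype ι] [DecidableEq ι]
    (A : Matrix ι ι ℝ) (k : ℕ) (b r : ι → ℝ) : Prop :=
  ∃ p : Polynomial ℝ, IsPik k p ∧ r = (Polynomial.aeval A p).mulVec b ∧
    ∀ q : Polynomial ℝ, IsPik k q → euclNorm r ≤ euclNorm ((Polynomial.aeval A q).mulVec b)

/-- `p` is the `k`-th GMRES polynomial of `A` and `b`: `p ∈ π_k` minimizes `‖p(A)b‖`. -/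
def IsGmresPoly {ι : Type*} [Fintype ι] [DecidableEq ι]
    (A : Matrix ι ι ℝ) (k : ℕ) (b : ι → ℝ) (p : Polynomial ℝ) : Prop :=
  IsPik k p ∧ ∀ q : Polynomial ℝ, IsPik k q →
    euclNorm ((Polynomial.aeval A p).mulVec b) ≤ euclNorm ((Polynomial.aeval A q).mulVec b)

/-- The Krylov subspace `K_k(A,b) = span{b, Ab, …, A^{k-1}b}`. -/
noncomputable def krylov {ι : Type*} [Fintype ι] [DecidableEq ι]
    (A : Matrix ι ι ℝ) (k : ℕ) (b : ι → ℝ) : Submodule ℝ (ι → ℝ) :=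
  Submodule.span ℝ (Set.range fun i : Fin k => (A ^ (i : ℕ)).mulVec b)

/-- `b` satisfies the cross equality for `A` and step `k`. -/
def CrossEq {ι : Type*} [Fintype ι] [DecidableEq ι]
    (A : Matrix ι ι ℝ) (k : ℕ) (b : ι → ℝ) : Prop :=
  ∀ r s : ι → ℝ, IsGmresRes A k b r → IsGmresRes Aᵀ k ((euclNorm r)⁻¹ • r) s →
    b = (euclNorm s)⁻¹ • s

/-- The Krylov matrix `K(v) = [Av, A²v, …, A^k v]`. -/
noncomputable def Kmat {n : ℕ} (A : Matrix (Fin n) (Fin n) ℝ) (k : ℕ) (v : Fin n → ℝ) :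
    Matrix (Fin n) (Fin k) ℝ :=
  Matrix.of fun i j => (A ^ ((j : ℕ) + 1)).mulVec v i

/-- `γ(v) = (K(v)ᵀK(v))⁻¹ K(v)ᵀ v`. -/
noncomputable def gammaVec {n : ℕ} (A : Matrix (Fin n) (Fin n) ℝ) (k : ℕ) (v : Fin n → ℝ) :
    Fin k → ℝ :=
  ((Kmat A k v)ᵀ * Kmat A k v)⁻¹ *ᵥ ((Kmat A k v)ᵀ *ᵥ v)

/-- `g(v) = min_{c ∈ ℝ^k} ‖v - K(v)c‖²`. -/
noncomputable def gFun {n : ℕ} (A : Matrix (Fin n) (Fin n) ℝ) (k : ℕ) (v : Fin n → ℝ) : ℝ :=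
  sInf {s : ℝ | ∃ c : Fin k → ℝ, s = euclNorm (v - Kmat A k v *ᵥ c) ^ 2}

/-- `p(z; c) = 1 - ∑_{j=1}^k c_j z^j`. -/
noncomputable def pPoly {k : ℕ} (c : Fin k → ℝ) : Polynomial ℝ :=
  1 - ∑ j : Fin k, Polynomial.C (c j) * Polynomial.X ^ ((j : ℕ) + 1)

/-- `f(c,v) = ‖p(A;c)v‖²`. -/
noncomputable def fFun {n k : ℕ} (A : Matrix (Fin n) (Fin n) ℝ) (c : Fin k → ℝ)
    (v : Fin n → ℝ) : ℝ :=
  euclNorm ((Polynomial.aeval A (pPoly c)).mulVec v) ^ 2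

/-- `F(c,v) = f(c,v)/(vᵀv)`. -/
noncomputable def FFun {n k : ℕ} (A : Matrix (Fin n) (Fin n) ℝ) (c : Fin k → ℝ)
    (v : Fin n → ℝ) : ℝ :=
  fFun A c v / edot v v

/-- The Toh matrix `A(ω, ε)`. -/
noncomputable def tohMatrix (ω ε : ℝ) : Matrix (Fin 4) (Fin 4) ℝ :=
  !![1, ε, 0, 0; 0, -1, ω / ε, 0; 0, 0, 1, ε; 0, 0, 0, -1]

/-- `p` is a `k`-th worst-case GMRES polynomial of `A`. -/
def IsWCPoly {ι : Type*} [Fintype ι] [DecidableEq ι]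
    (A : Matrix ι ι ℝ) (k : ℕ) (p : Polynomial ℝ) : Prop :=
  IsPik k p ∧ ∃ b : ι → ℝ, euclNorm b = 1 ∧
    (∀ q : Polynomial ℝ, IsPik k q →
      euclNorm ((Polynomial.aeval A p).mulVec b) ≤ euclNorm ((Polynomial.aeval A q).mulVec b)) ∧
    euclNorm ((Polynomial.aeval A p).mulVec b) = Psi A k

/-- The spectral (Euclidean operator) norm of a real matrix. -/
noncomputable def specNorm {ι : Type*} [Fintype ι] (M : Matrix ι ι ℝ) : ℝ :=
  sSup {r : ℝ | ∃ v : ι → ℝ, euclNorm v = 1 ∧ r = euclNorm (M *ᵥ v)}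

/-- The `k`-th ideal GMRES approximation `φ_k(A) = min_{p ∈ π_k} ‖p(A)‖`. -/
noncomputable def phiIdeal {ι : Type*} [Fintype ι] [DecidableEq ι]
    (A : Matrix ι ι ℝ) (k : ℕ) : ℝ :=
  sInf {r : ℝ | ∃ p : Polynomial ℝ, IsPik k p ∧ r = specNorm (Polynomial.aeval A p)}

/-- Complexification of a real matrix. -/
noncomputable def matC {ι : Type*} (A : Matrix ι ι ℝ) : Matrix ι ι ℂ :=
  A.map fun x => (x : ℂ)

/-- Complexification of a real vector. -/
noncomputable def vecC {ι : Type*} (b : ι → ℝ) : ι → ℂ := fun i => (b i : ℂ)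

/-- `Ψ_{k,ℂ,ℝ}(A)`: complex polynomials, real initial vectors. -/
noncomputable def PsiCR {ι : Type*} [Fintype ι] [DecidableEq ι]
    (A : Matrix ι ι ℝ) (k : ℕ) : ℝ :=
  sSup {r : ℝ | ∃ b : ι → ℝ, euclNorm b = 1 ∧
    r = sInf {s : ℝ | ∃ p : Polynomial ℂ, IsPikC k p ∧
      s = euclNormC ((Polynomial.aeval (matC A) p).mulVec (vecC b))}}

/-- `Ψ_{k,ℂ,ℂ}(A)`: complex polynomials, complex initial vectors. -/
noncomputable def PsiCC {ι : Type*} [Fintype ι] [DecidableEq ι]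
    (A : Matrix ι ι ℝ) (k : ℕ) : ℝ :=
  sSup {r : ℝ | ∃ b : ι → ℂ, euclNormC b = 1 ∧
    r = sInf {s : ℝ | ∃ p : Polynomial ℂ, IsPikC k p ∧
      s = euclNormC ((Polynomial.aeval (matC A) p).mulVec b)}}

/-- `Ψ_{k,ℝ,ℂ}(A)`: real polynomials, complex initial vectors. -/
noncomputable def PsiRC {ι : Type*} [Fintype ι] [DecidableEq ι]
    (A : Matrix ι ι ℝ) (k : ℕ) : ℝ :=
  sSup {r : ℝ | ∃ b : ι → ℂ, euclNormC b = 1 ∧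
    r = sInf {s : ℝ | ∃ p : Polynomial ℝ, IsPik k p ∧
      s = euclNormC ((Polynomial.aeval (matC A) (p.map (algebraMap ℝ ℂ))).mulVec b)}}

/-- `φ_{k,ℝ,ℝ}(A)`. -/
noncomputable def phiRR {ι : Type*} [Fintype ι] [DecidableEq ι]
    (A : Matrix ι ι ℝ) (k : ℕ) : ℝ :=
  sInf {r : ℝ | ∃ p : Polynomial ℝ, IsPik k p ∧
    r = sSup {s : ℝ | ∃ b : ι → ℝ, euclNorm b = 1 ∧
      s = euclNorm ((Polynomial.aeval A p).mulVec b)}}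

/-- `φ_{k,ℂ,ℝ}(A)`. -/
noncomputable def phiCR {ι : Type*} [Fintype ι] [DecidableEq ι]
    (A : Matrix ι ι ℝ) (k : ℕ) : ℝ :=
  sInf {r : ℝ | ∃ p : Polynomial ℂ, IsPikC k p ∧
    r = sSup {s : ℝ | ∃ b : ι → ℝ, euclNorm b = 1 ∧
      s = euclNormC ((Polynomial.aeval (matC A) p).mulVec (vecC b))}}

/-- `φ_{k,ℝ,ℂ}(A)`. -/
noncomputable def phiRC {ι : Type*} [Fintype ι] [DecidableEq ι]
    (A : Matrix ι ι ℝ) (k : ℕ) : ℝ :=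
  sInf {r : ℝ | ∃ p : Polynomial ℝ, IsPik k p ∧
    r = sSup {s : ℝ | ∃ b : ι → ℂ, euclNormC b = 1 ∧
      s = euclNormC ((Polynomial.aeval (matC A) (p.map (algebraMap ℝ ℂ))).mulVec b)}}

/-- `φ_{k,ℂ,ℂ}(A)`. -/
noncomputable def phiCC {ι : Type*} [Fintype ι] [DecidableEq ι]
    (A : Matrix ι ι ℝ) (k : ℕ) : ℝ :=
  sInf {r : ℝ | ∃ p : Polynomial ℂ, IsPikC k p ∧
    r = sSup {s : ℝ | ∃ b : ι → ℂ, euclNormC b = 1 ∧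
      s = euclNormC ((Polynomial.aeval (matC A) p).mulVec b)}}

/-!
Since `r` is orthogonal to `A·K_k(A, b)` and `b - r` lies in it, `⟨r, q(A)b⟩ = q(0) ‖r‖²` for every
polynomial `q` of degree at most `k`, and the left side equals `⟨b, q(Aᵀ)r⟩`. If `q(Aᵀ)r = 0`, this
forces `q(0) = 0`; as `Aᵀ` is invertible, `q` can be divided by `X` until nothing is left, so
`d(Aᵀ, r) > k`. If `b = q(Aᵀ)r`, it gives `q(0) ‖r‖² = ‖b‖² = 1`, so that `‖r‖² b` is of the form
`p(Aᵀ)r` with `p(0) = 1`; the same identity shows that it is orthogonal to `Aᵀ·K_k(Aᵀ, r)`. It is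
therefore the GMRES residual of `r` for `Aᵀ`, and normalizing it gives back `b`. For `k = n - 1` the
space `K_n(Aᵀ, r)` has dimension `n` by the bound on `d(Aᵀ, r)`, and the membership is automatic.
-/

section PolynomialDegree

variable {R : Type*} [Semiring R] {q : R[X]} {k : ℕ}

theorem divX_X_mul (q : R[X]) : (X * q).divX = q := by
  ext n
  rw [coeff_divX, coeff_X_mul]

theorem divX_mem_degreeLT_iff :
    q.divX ∈ degreeLT R k ↔ q ∈ degreeLT R (k + 1) := by
  simp only [mem_degreeLT, degree_lt_iff_coeff_zero, coeff_divX]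
  refine ⟨fun h m hm => ?_, fun h m hm => h (m + 1) (by lia)⟩
  obtain ⟨m, rfl⟩ := Nat.exists_eq_add_one_of_ne_zero (show m ≠ 0 by lia)
  exact h m (by lia)

theorem mem_degreeLT_succ :
    q ∈ degreeLT R (k + 1) ↔ q.natDegree ≤ k := by
  rw [degreeLT_succ_eq_degreeLE, mem_degreeLE, natDegree_le_iff_degree_le]

end PolynomialDegree

section MatrixPolynomial

variable {ι R : Type*} [Fintype ι] [DecidableEq ι] [CommSemiring R]

/-- The map `q ↦ q(A) v`, linear in the polynomial `q`: its kernel consists of the polynomials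
annihilating `v`, and the image of `R[X]_k` under it is the `k`-th Krylov subspace. -/
noncomputable def aevalMulVec (A : Matrix ι ι R) (v : ι → R) : R[X] →ₗ[R] (ι → R) :=
  (Matrix.mulVecBilin R R).flip v ∘ₗ (aeval A).toLinearMap

@[simp]
theorem aevalMulVec_apply (A : Matrix ι ι R) (v : ι → R) (q : R[X]) :
    aevalMulVec A v q = aeval A q *ᵥ v := rfl

theorem aeval_X_mul_mulVec (A : Matrix ι ι R) (q : R[X]) (v : ι → R) :
    aeval A (X * q) *ᵥ v = aeval A q *ᵥ (A *ᵥ v) := by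
  rw [mul_comm, map_mul, aeval_X, mulVec_mulVec]

theorem aeval_mulVec_eq_eval_smul_add (A : Matrix ι ι R) (q : R[X]) (v : ι → R) :
    aeval A q *ᵥ v = q.eval 0 • v + aeval A q.divX *ᵥ (A *ᵥ v) := by
  conv_lhs => rw [← X_mul_divX_add q, map_add, add_mulVec, aeval_X_mul_mulVec, aeval_C,
    Algebra.algebraMap_eq_smul_one, smul_mulVec, one_mulVec, coeff_zero_eq_eval_zero, add_comm]

theorem aeval_transpose (A : Matrix ι ι R) (q : R[X]) : aeval Aᵀ q = (aeval A q)ᵀ := by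
  simp [aeval_eq_sum_range, transpose_sum, transpose_pow]

theorem dotProduct_aeval_transpose_mulVec_comm (A : Matrix ι ι R) (q : R[X]) (v w : ι → R) :
    v ⬝ᵥ (aeval Aᵀ q *ᵥ w) = w ⬝ᵥ (aeval A q *ᵥ v) := by
  rw [aeval_transpose, dotProduct_transpose_mulVec]

end MatrixPolynomial

section EuclideanNorm

variable {ι : Type*} [Fintype ι] {b r v w : ι → ℝ}

theorem euclNorm_eq_norm_toLp (v : ι → ℝ) : euclNorm v = ‖WithLp.toLp 2 v‖ := by
  simp [euclNorm, EuclideanSpace.norm_eq]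

theorem euclNorm_nonneg (v : ι → ℝ) : 0 ≤ euclNorm v := Real.sqrt_nonneg _

theorem euclNorm_pos_iff : 0 < euclNorm v ↔ v ≠ 0 := by
  rw [euclNorm_eq_norm_toLp, norm_pos_iff, ne_eq, WithLp.toLp_eq_zero]

theorem euclNorm_smul (c : ℝ) (v : ι → ℝ) : euclNorm (c • v) = |c| * euclNorm v := by
  simp [euclNorm_eq_norm_toLp, norm_smul]

theorem euclNorm_sq (v : ι → ℝ) : euclNorm v ^ 2 = v ⬝ᵥ v := by
  rw [euclNorm_eq_norm_toLp, EuclideanSpace.real_norm_sq_eq]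
  simp [dotProduct, sq]

theorem inv_euclNorm_smul_smul_eq {c : ℝ} (hc : 0 < c) (hv : euclNorm v = 1) :
    (euclNorm (c • v))⁻¹ • (c • v) = v := by
  rw [euclNorm_smul, hv, mul_one, abs_of_pos hc, inv_smul_smul₀ hc.ne']

theorem euclNorm_add_sq_of_dotProduct_eq_zero (h : v ⬝ᵥ w = 0) :
    euclNorm (v + w) ^ 2 = euclNorm v ^ 2 + euclNorm w ^ 2 := by
  simp [euclNorm_sq, dotProduct_comm w v, h]

theorem exists_sub_mem_and_dotProduct_eq_zero (U : Submodule ℝ (ι → ℝ)) (b : ι → ℝ) :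
    ∃ r, b - r ∈ U ∧ ∀ w ∈ U, r ⬝ᵥ w = 0 := by
  let V : Submodule ℝ (EuclideanSpace ℝ ι) :=
    U.comap (WithLp.linearEquiv 2 ℝ (ι → ℝ)).toLinearMap
  refine ⟨b - V.starProjection (WithLp.toLp 2 b), ?_, fun w hw => ?_⟩
  · rw [sub_sub_cancel]
    exact V.starProjection_apply_mem (WithLp.toLp 2 b)
  · have h := V.starProjection_inner_eq_zero (WithLp.toLp 2 b) (WithLp.toLp 2 w) hw
    rwa [EuclideanSpace.inner_eq_star_dotProduct, star_trivial, dotProduct_comm] at h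

theorem forall_euclNorm_le_iff_dotProduct_eq_zero {U : Submodule ℝ (ι → ℝ)} (hr : b - r ∈ U) :
    (∀ v, b - v ∈ U → euclNorm r ≤ euclNorm v) ↔ ∀ w ∈ U, r ⬝ᵥ w = 0 := by
  have hsub {u v : ι → ℝ} (hu : b - u ∈ U) (hv : b - v ∈ U) : v - u ∈ U := by
    simpa using U.sub_mem hu hv
  constructor
  · intro hmin
    obtain ⟨r', hr', horth⟩ := exists_sub_mem_and_dotProduct_eq_zero U b
    have hpyth := euclNorm_add_sq_of_dotProduct_eq_zero (horth _ (hsub hr' hr))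
    rw [add_sub_cancel] at hpyth
    have hle : euclNorm r ^ 2 ≤ euclNorm r' ^ 2 :=
      pow_le_pow_left₀ (euclNorm_nonneg r) (hmin r' hr') 2
    have hzero : euclNorm (r - r') ^ 2 = 0 := le_antisymm (by linarith) (sq_nonneg _)
    rw [euclNorm_sq, dotProduct_self_eq_zero, sub_eq_zero] at hzero
    rwa [hzero]
  · intro horth v hv
    have hpyth := euclNorm_add_sq_of_dotProduct_eq_zero (horth _ (hsub hr hv))
    rw [add_sub_cancel] at hpyth
    rw [← sq_le_sq₀ (euclNorm_nonneg r) (euclNorm_nonneg v), hpyth]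
    exact le_add_of_nonneg_right (sq_nonneg _)

end EuclideanNorm

section Gmres

variable {ι : Type*} [Fintype ι] [DecidableEq ι] {A : Matrix ι ι ℝ} {k : ℕ} {b r s v : ι → ℝ}

theorem krylov_eq_map_degreeLT (A : Matrix ι ι ℝ) (k : ℕ) (b : ι → ℝ) :
    krylov A k b = (degreeLT ℝ k).map (aevalMulVec A b) := by
  rw [degreeLT_eq_span_X_pow, Submodule.map_span, krylov]
  congr 1
  ext v
  simp [Fin.exists_iff]

theorem mem_krylov_iff : v ∈ krylov A k b ↔ ∃ q ∈ degreeLT ℝ k, aeval A q *ᵥ b = v := by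
  simp [krylov_eq_map_degreeLT]

theorem exists_natDegree_eq_dAb (A : Matrix ι ι ℝ) (b : ι → ℝ) :
    ∃ q : ℝ[X], q ≠ 0 ∧ q.natDegree = dAb A b ∧ aeval A q *ᵥ b = 0 :=
  Nat.sInf_mem (s := {d | ∃ q : ℝ[X], q ≠ 0 ∧ q.natDegree = d ∧ aeval A q *ᵥ b = 0})
    ⟨_, A.charpoly, A.charpoly_monic.ne_zero, rfl, by simp [aeval_self_charpoly]⟩

theorem dAb_le_natDegree {q : ℝ[X]} (hq : q ≠ 0) (h : aeval A q *ᵥ b = 0) :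
    dAb A b ≤ q.natDegree :=
  Nat.sInf_le ⟨q, hq, rfl, h⟩

theorem eq_zero_of_mem_degreeLT_of_le_dAb {q : ℝ[X]} (hq : q ∈ degreeLT ℝ k) (hk : k ≤ dAb A b)
    (h : aeval A q *ᵥ b = 0) : q = 0 := by
  by_contra hq0
  have hlt : q.natDegree < k := (natDegree_lt_iff_degree_lt hq0).2 (mem_degreeLT.1 hq)
  exact (hlt.trans_le hk).not_ge (dAb_le_natDegree hq0 h)

theorem finrank_krylov (hk : k ≤ dAb A b) : Module.finrank ℝ (krylov A k b) = k := by
  have hdisj : Disjoint (degreeLT ℝ k) (LinearMap.ker (aevalMulVec A b)) :=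
    Submodule.disjoint_def.2 fun _ hq h => eq_zero_of_mem_degreeLT_of_le_dAb hq hk h
  rw [krylov_eq_map_degreeLT, ← LinearMap.range_domRestrict,
    LinearMap.finrank_range_of_inj (LinearMap.injective_domRestrict_iff.2 hdisj),
    (degreeLTEquiv ℝ k).finrank_eq, Module.finrank_fin_fun]

theorem krylov_eq_top_of_eq_card (hk : k ≤ dAb A b) (hcard : k = Fintype.card ι) :
    krylov A k b = ⊤ :=
  Submodule.eq_top_of_finrank_eq <| by
    rw [finrank_krylov hk, Module.finrank_fintype_fun_eq_card, hcard]

theorem lt_dAb_of_forall_eval_zero_eq_zero (hA : IsUnit A)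
    (h : ∀ q ∈ degreeLT ℝ (k + 1), aeval A q *ᵥ b = 0 → q.eval 0 = 0) : k < dAb A b := by
  -- An annihilator of minimal degree with root `0` could be divided by `X`, as `A` is injective.
  by_contra! hle
  obtain ⟨q, hq0, hdeg, hann⟩ := exists_natDegree_eq_dAb A b
  have hconst : q.eval 0 = 0 := h q (mem_degreeLT_succ.2 (hdeg.trans_le hle)) hann
  obtain ⟨p, rfl⟩ : X ∣ q := X_dvd_iff.2 (coeff_zero_eq_eval_zero q ▸ hconst)
  have hp0 : p ≠ 0 := right_ne_zero_of_mul hq0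
  have hann' : aeval A p *ᵥ b = 0 := by
    rw [map_mul, aeval_X, ← mulVec_mulVec] at hann
    exact (mulVec_injective_iff_isUnit.2 hA) (hann.trans (mulVec_zero A).symm)
  have hmin := dAb_le_natDegree hp0 hann'
  rw [natDegree_X_mul hp0] at hdeg
  lia

theorem isPik_iff_divX_mem_degreeLT {p : ℝ[X]} :
    IsPik k p ↔ p.divX ∈ degreeLT ℝ k ∧ p.eval 0 = 1 := by
  rw [IsPik, divX_mem_degreeLT_iff, mem_degreeLT_succ]

theorem exists_isPik_eq_aeval_mulVec_iff :
    (∃ p, IsPik k p ∧ v = aeval A p *ᵥ b) ↔ b - v ∈ krylov A k (A *ᵥ b) := by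
  simp only [mem_krylov_iff, isPik_iff_divX_mem_degreeLT]
  constructor
  · rintro ⟨p, ⟨hp, hp0⟩, rfl⟩
    refine ⟨-p.divX, neg_mem hp, ?_⟩
    rw [aeval_mulVec_eq_eval_smul_add A p, hp0, one_smul, map_neg, neg_mulVec, sub_add_cancel_left]
  · rintro ⟨q, hq, hqv⟩
    have hdivX : (1 - X * q).divX = -q := by
      rw [sub_eq_neg_add, ← mul_neg, ← C_1, divX_add, divX_X_mul, divX_C, add_zero]
    refine ⟨1 - X * q, ⟨hdivX ▸ neg_mem hq, by simp⟩, ?_⟩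
    rw [aeval_mulVec_eq_eval_smul_add, hdivX, map_neg, neg_mulVec, hqv]
    simp

-- `krylov A k (A *ᵥ b)` is the space `A·K_k(A, b)` of the GMRES orthogonality condition.
theorem isGmresRes_iff :
    IsGmresRes A k b r ↔
      b - r ∈ krylov A k (A *ᵥ b) ∧ ∀ w ∈ krylov A k (A *ᵥ b), r ⬝ᵥ w = 0 := by
  rw [← and_congr_right forall_euclNorm_le_iff_dotProduct_eq_zero]
  simp only [← exists_isPik_eq_aeval_mulVec_iff, IsGmresRes, ← and_assoc, exists_and_right]
  refine and_congr_right fun _ => ⟨?_, fun h q hq => h _ ⟨q, hq, rfl⟩⟩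
  rintro h _ ⟨q, hq, rfl⟩
  exact h q hq

theorem exists_isGmresRes (A : Matrix ι ι ℝ) (k : ℕ) (b : ι → ℝ) : ∃ r, IsGmresRes A k b r := by
  simpa only [isGmresRes_iff] using exists_sub_mem_and_dotProduct_eq_zero _ b

namespace IsGmresRes

theorem eq (hr : IsGmresRes A k b r) (hs : IsGmresRes A k b s) : r = s := by
  rw [isGmresRes_iff] at hr hs
  have hmem : r - s ∈ krylov A k (A *ᵥ b) := by simpa using sub_mem hs.1 hr.1
  have hself : (r - s) ⬝ᵥ (r - s) = 0 := by
    rw [sub_dotProduct, hr.2 _ hmem, hs.2 _ hmem, sub_zero]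
  exact sub_eq_zero.1 (dotProduct_self_eq_zero.1 hself)

theorem smul (hr : IsGmresRes A k b r) (c : ℝ) : IsGmresRes A k (c • b) (c • r) := by
  obtain ⟨p, hp, rfl, hmin⟩ := hr
  refine ⟨p, hp, (mulVec_smul _ c b).symm, fun q hq => ?_⟩
  rw [mulVec_smul, euclNorm_smul, euclNorm_smul]
  exact mul_le_mul_of_nonneg_left (hmin q hq) (abs_nonneg c)

theorem mem_krylov (hr : IsGmresRes A k b r) : r ∈ krylov A (k + 1) b := by
  obtain ⟨p, hp, rfl, -⟩ := hr
  exact mem_krylov_iff.2 ⟨p, mem_degreeLT_succ.2 hp.1, rfl⟩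

theorem ne_zero (hr : IsGmresRes A k b r) (hd : k < dAb A b) : r ≠ 0 := by
  obtain ⟨p, ⟨hp, hp0⟩, rfl, -⟩ := hr
  intro hzero
  have hp_zero : p = 0 := eq_zero_of_mem_degreeLT_of_le_dAb (mem_degreeLT_succ.2 hp) hd hzero
  simp [hp_zero] at hp0

theorem dotProduct_aeval_mulVec (hr : IsGmresRes A k b r) {q : ℝ[X]}
    (hq : q ∈ degreeLT ℝ (k + 1)) : r ⬝ᵥ (aeval A q *ᵥ b) = q.eval 0 * euclNorm r ^ 2 := by
  rw [isGmresRes_iff] at hr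
  obtain ⟨hmem, horth⟩ := hr
  have hrb : r ⬝ᵥ b = euclNorm r ^ 2 := by
    rw [euclNorm_sq, ← sub_eq_zero, ← dotProduct_sub, horth _ hmem]
  have htail : r ⬝ᵥ (aeval A q.divX *ᵥ (A *ᵥ b)) = 0 :=
    horth _ (mem_krylov_iff.2 ⟨q.divX, divX_mem_degreeLT_iff.2 hq, rfl⟩)
  rw [aeval_mulVec_eq_eval_smul_add, dotProduct_add, htail, add_zero, dotProduct_smul, hrb,
    smul_eq_mul]

theorem dotProduct_aeval_transpose_mulVec (hr : IsGmresRes A k b r) {q : ℝ[X]}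
    (hq : q ∈ degreeLT ℝ (k + 1)) : b ⬝ᵥ (aeval Aᵀ q *ᵥ r) = q.eval 0 * euclNorm r ^ 2 := by
  rw [dotProduct_aeval_transpose_mulVec_comm, hr.dotProduct_aeval_mulVec hq]

theorem lt_dAb_transpose (hr : IsGmresRes A k b r) (hr0 : r ≠ 0) (hA : IsUnit A) :
    k < dAb Aᵀ r := by
  refine lt_dAb_of_forall_eval_zero_eq_zero ((isUnit_transpose A).2 hA) fun q hq hann => ?_
  have h := hr.dotProduct_aeval_transpose_mulVec hq
  rw [hann, dotProduct_zero, zero_eq_mul] at h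
  exact h.resolve_right (pow_ne_zero 2 (euclNorm_pos_iff.2 hr0).ne')

theorem transpose_of_mem_krylov (hr : IsGmresRes A k b r) (hb : euclNorm b = 1)
    (hm : b ∈ krylov Aᵀ (k + 1) r) : IsGmresRes Aᵀ k r (euclNorm r ^ 2 • b) := by
  obtain ⟨q, hq, hqb⟩ := mem_krylov_iff.1 hm
  have hq0 : q.eval 0 * euclNorm r ^ 2 = 1 := by
    rw [← hr.dotProduct_aeval_transpose_mulVec hq, hqb, ← euclNorm_sq, hb, one_pow]
  rw [isGmresRes_iff]
  constructor
  · refine exists_isPik_eq_aeval_mulVec_iff.1 ⟨euclNorm r ^ 2 • q, ⟨?_, ?_⟩, ?_⟩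
    · exact mem_degreeLT_succ.1 (Submodule.smul_mem _ _ hq)
    · rw [eval_smul, smul_eq_mul, mul_comm, hq0]
    · rw [map_smul, smul_mulVec, hqb]
  · intro w hw
    obtain ⟨p, hp, rfl⟩ := mem_krylov_iff.1 hw
    rw [← aeval_X_mul_mulVec, smul_dotProduct, hr.dotProduct_aeval_transpose_mulVec]
    · simp
    · rwa [← divX_mem_degreeLT_iff, divX_X_mul]

theorem crossEq_iff_mem_krylov (hr : IsGmresRes A k b r) (hb : euclNorm b = 1) :
    CrossEq A k b ↔ b ∈ krylov Aᵀ (k + 1) r := by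
  constructor
  · intro hcross
    obtain ⟨t, ht⟩ := exists_isGmresRes Aᵀ k r
    rw [hcross r _ hr (ht.smul _)]
    exact Submodule.smul_mem _ _ (Submodule.smul_mem _ _ ht.mem_krylov)
  · intro hm r' s hr' hs
    obtain rfl := hr'.eq hr
    have hr0 : r' ≠ 0 := by
      rintro rfl
      obtain ⟨q, -, rfl⟩ := mem_krylov_iff.1 hm
      simp [euclNorm] at hb
    have hnorm : 0 < euclNorm r' := euclNorm_pos_iff.2 hr0
    have hs' := hs.eq ((hr.transpose_of_mem_krylov hb hm).smul (euclNorm r')⁻¹)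
    rw [hs', smul_smul _ _ b, inv_euclNorm_smul_smul_eq (by positivity) hb]

end IsGmresRes

theorem crossEq_of_dAb_eq_card (hA : IsUnit A) (hb : euclNorm b = 1)
    (hd : dAb A b = Fintype.card ι) : CrossEq A (Fintype.card ι - 1) b := by
  have hb0 : b ≠ 0 := euclNorm_pos_iff.1 (hb ▸ one_pos)
  have hcard : Fintype.card ι - 1 + 1 = Fintype.card ι := by
    obtain ⟨i, -⟩ := Function.ne_iff.1 hb0
    exact Nat.sub_add_cancel (Fintype.card_pos_iff.2 ⟨i⟩)
  have hlt : Fintype.card ι - 1 < dAb A b := by lia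
  obtain ⟨r, hr⟩ := exists_isGmresRes A (Fintype.card ι - 1) b
  have htop := krylov_eq_top_of_eq_card (hr.lt_dAb_transpose (hr.ne_zero hlt) hA) hcard
  exact (hr.crossEq_iff_mem_krylov hb).2 (htop ▸ Submodule.mem_top)

end Gmres

/-- For a unit norm `b` with `d(A,b) > k` and `r_k = GMRES(A,b,k)`:
`d(Aᵀ, r_k) > k`, and `b` satisfies the cross equality for `A` and step `k` iff
`b ∈ K_{k+1}(Aᵀ, r_k)`. In particular, every unit norm `b'` with `d(A,b') = n`
satisfies the cross equality for `A` and step `n - 1`. -/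
theorem cross_equality_characterization {n : ℕ} (A : Matrix (Fin n) (Fin n) ℝ)
    (hA : IsUnit A) (k : ℕ) (hk : 1 ≤ k)
    (b : Fin n → ℝ) (hb : euclNorm b = 1) (hd : k < dAb A b)
    (r : Fin n → ℝ) (hr : IsGmresRes A k b r) :
    k < dAb Aᵀ r ∧
    (CrossEq A k b ↔ b ∈ krylov Aᵀ (k + 1) r) ∧
    (∀ b' : Fin n → ℝ, euclNorm b' = 1 → dAb A b' = n → CrossEq A (n - 1) b') := by
  refine ⟨hr.lt_dAb_transpose (hr.ne_zero hd) hA, hr.crossEq_iff_mem_krylov hb, ?_⟩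
  intro b' hb' hd'
  simpa using crossEq_of_dAb_eq_card hA hb' (by simpa using hd')
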